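/- Let 𝒟 = {DF(w) : w ∈ Max}, regarded as a subspace of the space of nonempty compact subsets of ℝ³ with the Hausdorff metric. Then 𝒟 is totally ordered by inclusion, and there is a homeomorphism h from 𝒟 onto the compact interval [0,1] which is order-preserving: for Λ, Λ' ∈ 𝒟, Λ ⊆ Λ' if and only if h(Λ) ≤ h(Λ'). -/

import Mathlib

open Filter Topology MeasureTheory

/-- The sequence space `Σ⁺ = {0,1,2}^ℕ` (with the product topology). -/
abbrev Seq3 := ℕ → Fin 3

/-- The shift map `σ`. -/
def shift (s : Seq3) : Seq3 := fun n => s (n + 1)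

/-- The observable `κ(s) = e_{s₀}`. -/
noncomputable def kappa (s : Seq3) : Fin 3 → ℝ := fun i => if i = s 0 then 1 else 0

/-- The cocycle `κ_σ(s,r) = Σ_{i<r} κ(σⁱ s)`. -/
noncomputable def birk (s : Seq3) (r : ℕ) : Fin 3 → ℝ :=
  ∑ i ∈ Finset.range r, kappa (shift^[i] s)

/-- The Birkhoff digit frequency of `s` exists and equals `v`. -/
def hasFreq (s : Seq3) (v : Fin 3 → ℝ) : Prop :=
  Tendsto (fun r : ℕ => (r : ℝ)⁻¹ • birk s r) atTop (nhds v)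

/-- The lexicographic order on `Σ⁺`. -/
def lexLe (s t : Seq3) : Prop :=
  s = t ∨ ∃ n, (∀ i, i < n → s i = t i) ∧ s n < t n

/-- The set `Max` of maximal sequences. -/
def MaxSet : Set Seq3 := {w | w 0 = 2 ∧ ∀ r : ℕ, lexLe (shift^[r] w) w}

/-- The symbolic β-shift `B(w)`. -/
def BetaShift (w : Seq3) : Set Seq3 := {s | ∀ r : ℕ, lexLe (shift^[r] s) w}

/-- The digit frequency set `DF(w)`. -/
def DF (w : Seq3) : Set (Fin 3 → ℝ) := {v | ∃ s ∈ BetaShift w, hasFreq s v}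

/-- The Misiurewicz–Ziemian digit frequency set `DF_MZ(X)` of a subset `X ⊆ Σ⁺`. -/
def DFMZ (X : Set Seq3) : Set (Fin 3 → ℝ) :=
  {v | ∃ (s : ℕ → Seq3) (r : ℕ → ℕ), (∀ i, s i ∈ X) ∧ Tendsto r atTop atTop ∧
    Tendsto (fun i => (r i : ℝ)⁻¹ • birk (s i) (r i)) atTop (nhds v)}

/-- The standard 2-simplex `Δ ⊆ ℝ³`. -/
def Delta : Set (Fin 3 → ℝ) := {α | (∀ i, 0 ≤ α i) ∧ α 0 + α 1 + α 2 = 1}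

/-- `Δ' = {α ∈ Δ : α₂ > 0}`. -/
def Delta' : Set (Fin 3 → ℝ) := {α | α ∈ Delta ∧ 0 < α 2}

/-- `I` is the infimax sequence of `α`: the infimum, in the lexicographic order, of the
(nonempty) set of maximal sequences with digit frequency `α`; it belongs to `Max`. -/
def IsInfimax (α : Fin 3 → ℝ) (I : Seq3) : Prop :=
  {w | w ∈ MaxSet ∧ hasFreq w α}.Nonempty ∧ I ∈ MaxSet ∧
    (∀ w, w ∈ MaxSet ∧ hasFreq w α → lexLe I w) ∧
    (∀ b : Seq3, (∀ w, w ∈ MaxSet ∧ hasFreq w α → lexLe b w) → lexLe b I)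

/-- The closure of the forward `σ`-orbit of `s` (e.g. `C_α` is `orbitClosure I(α)`). -/
def orbitClosure (s : Seq3) : Set Seq3 := closure {t | ∃ r : ℕ, shift^[r] s = t}

/-- A vector in `ℝ³` is rational if all its coordinates are. -/
def IsRat (v : Fin 3 → ℝ) : Prop := ∀ i, ∃ q : ℚ, v i = (q : ℝ)

/-- A minimal set of a continuous map: a nonempty compact invariant set in which every
point has dense forward orbit. -/
def IsMinimalSet {X : Type*} [TopologicalSpace X] (f : X → X) (C : Set X) : Prop :=
  C.Nonempty ∧ IsCompact C ∧ Set.MapsTo f C C ∧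
    ∀ x ∈ C, C ⊆ closure {y | ∃ n : ℕ, f^[n] x = y}

section Helpers

lemma shift_iter (r : ℕ) : ∀ (s : Seq3) (i : ℕ), shift^[r] s i = s (r + i) := by
  induction r with
  | zero => intro s i; simp
  | succ k ih =>
    intro s i
    rw [Function.iterate_succ_apply, ih]
    simp only [shift]
    congr 1; omega

lemma lexLe_iff (s t : Seq3) :
    lexLe s t ↔ ∀ n, (∀ i, i < n → s i = t i) → s n ≤ t n := by
  constructor
  · rintro (h | ⟨m, h1, h2⟩) n hn
    · rw [h]
    · rcases lt_trichotomy n m with h | h | h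
      · exact (h1 n h).le
      · subst h; exact h2.le
      · exact absurd (hn m h) h2.ne
  · intro h
    by_cases hst : s = t
    · exact Or.inl hst
    · right
      have hex : ∃ n, s n ≠ t n := by
        by_contra hc
        push Not at hc
        exact hst (funext hc)
      classical
      refine ⟨Nat.find hex, fun i hi => by simpa using Nat.find_min hex hi, ?_⟩
      exact lt_of_le_of_ne (h _ fun i hi => by simpa using Nat.find_min hex hi) (Nat.find_spec hex)

lemma lexLe_refl (s : Seq3) : lexLe s s := Or.inl rfl

lemma lexLe_of_le (s t : Seq3) (h : ∀ i, s i ≤ t i) : lexLe s t :=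
  (lexLe_iff s t).2 fun n _ => h n

lemma lexLe_trans {s t u : Seq3} (h1 : lexLe s t) (h2 : lexLe t u) : lexLe s u := by
  rw [lexLe_iff] at *
  intro n hn
  have key : ∀ m, m ≤ n → ∀ i, i < m → s i = t i := by
    intro m
    induction m with
    | zero => intro _ i hi; omega
    | succ k ih =>
      intro hk i hi
      have ih' := ih (by omega)
      rcases Nat.lt_succ_iff_lt_or_eq.1 hi with h | h
      · exact ih' i h
      · subst h
        have a := h1 i ih'
        have b := h2 i (fun j hj => by rw [← ih' j hj]; exact hn j (by omega))
        rw [← hn i (by omega)] at b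
        exact le_antisymm a b
  exact (h1 n (key n le_rfl)).trans
    (h2 n (fun j hj => by rw [← key n le_rfl j hj]; exact hn j hj))

lemma lexLe_antisymm {s t : Seq3} (h1 : lexLe s t) (h2 : lexLe t s) : s = t := by
  rw [lexLe_iff] at *
  funext n
  induction n using Nat.strong_induction_on with
  | _ n ih => exact le_antisymm (h1 n ih) (h2 n fun i hi => (ih i hi).symm)

lemma not_lexLe {s t : Seq3} (h : ¬ lexLe s t) :
    ∃ n, (∀ i, i < n → t i = s i) ∧ t n < s n := by
  rw [lexLe_iff] at h
  push Not at h
  obtain ⟨n, a, b⟩ := h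
  exact ⟨n, fun i hi => (a i hi).symm, b⟩

lemma lexLe_total (s t : Seq3) : lexLe s t ∨ lexLe t s := by
  by_cases h : lexLe s t
  · exact Or.inl h
  · exact Or.inr (Or.inr (not_lexLe h))

lemma isClosed_agree {f g : Seq3 → Seq3} (hf : Continuous f) (hg : Continuous g) :
    IsClosed {x | lexLe (f x) (g x)} := by
  have : {x | lexLe (f x) (g x)} =
      ⋂ n : ℕ, {x | (∀ i, i < n → f x i = g x i) → f x n ≤ g x n} := by
    ext x; simp [lexLe_iff]
  rw [this]
  refine isClosed_iInter fun n => ?_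
  let φ : Seq3 → (Fin (n+1) → Fin 3 × Fin 3) := fun x i => (f x i, g x i)
  have hφ : Continuous φ := by
    refine continuous_pi fun i => ?_
    exact ((continuous_apply _).comp hf).prodMk ((continuous_apply _).comp hg)
  have h2 : {x | (∀ i, i < n → f x i = g x i) → f x n ≤ g x n} =
      φ ⁻¹' {p | (∀ i : Fin (n+1), i.1 < n → (p i).1 = (p i).2) →
        (p (Fin.last n)).1 ≤ (p (Fin.last n)).2} := by
    ext x
    simp only [Set.mem_ofPred_eq, Set.mem_preimage, φ, Fin.val_last]
    constructor
    · intro h h3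
      exact h fun i hi => h3 ⟨i, by omega⟩ hi
    · intro h h3
      exact h fun i hi => h3 i hi
  rw [h2]
  exact (isClosed_discrete _).preimage hφ

/-- Type synonym with lexicographic order. -/
def LS := ℕ → Fin 3

noncomputable instance : LinearOrder LS where
  le := lexLe
  le_refl := lexLe_refl
  le_trans := fun _ _ _ => lexLe_trans
  le_antisymm := fun _ _ => lexLe_antisymm
  le_total := lexLe_total
  toDecidableLE := Classical.decRel _

instance : TopologicalSpace LS := inferInstanceAs (TopologicalSpace (ℕ → Fin 3))

instance : ClosedIciTopology LS where
  isClosed_Ici := fun a => isClosed_agree (f := fun _ => a) (g := fun x => x) continuous_const continuous_id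

instance : ClosedIicTopology LS where
  isClosed_Iic := fun a => isClosed_agree (g := fun _ => a) (f := fun x => x) continuous_id continuous_const

lemma exists_lexMaxLS (K : Set LS) (hK : IsCompact K) (hne : K.Nonempty) :
    ∃ m ∈ K, ∀ x ∈ K, lexLe x m := by
  obtain ⟨m, h1, h2⟩ := IsCompact.exists_isGreatest (α := LS) hK hne
  exact ⟨m, h1, fun x hx => h2 hx⟩

lemma exists_lexMinLS (K : Set LS) (hK : IsCompact K) (hne : K.Nonempty) :
    ∃ m ∈ K, ∀ x ∈ K, lexLe m x := by
  obtain ⟨m, h1, h2⟩ := IsCompact.exists_isLeast (α := LS) hK hne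
  exact ⟨m, h1, fun x hx => h2 hx⟩

lemma exists_lexMax (K : Set Seq3) (hK : IsCompact K) (hne : K.Nonempty) :
    ∃ m ∈ K, ∀ x ∈ K, lexLe x m := exists_lexMaxLS K hK hne

lemma exists_lexMin (K : Set Seq3) (hK : IsCompact K) (hne : K.Nonempty) :
    ∃ m ∈ K, ∀ x ∈ K, lexLe m x := exists_lexMinLS K hK hne

lemma continuous_shift : Continuous shift :=
  continuous_pi fun i => continuous_apply (i+1)

lemma continuous_shift_iter (r : ℕ) : Continuous (shift^[r]) := continuous_shift.iterate r

lemma isCompact_MaxSet : IsCompact MaxSet := by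
  apply IsClosed.isCompact
  have : MaxSet = {w : Seq3 | w 0 = 2} ∩ ⋂ r : ℕ, {w | lexLe (shift^[r] w) w} := by
    ext w; simp [MaxSet]
  rw [this]
  refine IsClosed.inter ?_ (isClosed_iInter fun r => isClosed_agree (continuous_shift_iter r) continuous_id)
  exact isClosed_eq (continuous_apply 0) continuous_const

lemma shift_mem {w s : Seq3} (hs : s ∈ BetaShift w) (r : ℕ) : shift^[r] s ∈ BetaShift w := by
  intro k
  rw [← Function.iterate_add_apply]
  exact hs _

lemma beta_mono {w w' : Seq3} (h : lexLe w w') : BetaShift w ⊆ BetaShift w' :=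
  fun _ hs r => lexLe_trans (hs r) h

lemma DF_mono {w w' : Seq3} (h : lexLe w w') : DF w ⊆ DF w' := by
  rintro v ⟨s, hs, hv⟩
  exact ⟨s, beta_mono h hs, hv⟩

/-- standard basis vector -/
noncomputable def ev (a : Fin 3) : Fin 3 → ℝ := fun i => if i = a then 1 else 0

lemma birk_eq (s : Seq3) (r : ℕ) : birk s r = ∑ i ∈ Finset.range r, ev (s i) := by
  unfold birk
  refine Finset.sum_congr rfl fun i _ => ?_
  funext j
  simp [kappa, ev, shift_iter]

lemma norm_ev (a : Fin 3) : ‖ev a‖ ≤ 1 := by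
  rw [pi_norm_le_iff_of_nonneg zero_le_one]
  intro i
  unfold ev; split_ifs <;> simp

lemma norm_ev_sub (a b : Fin 3) : ‖ev a - ev b‖ ≤ 1 := by
  rw [pi_norm_le_iff_of_nonneg zero_le_one]
  intro i
  simp only [ev, Pi.sub_apply]; split_ifs <;> simp

lemma norm_birk (s : Seq3) (r : ℕ) : ‖birk s r‖ ≤ r := by
  rw [birk_eq]
  refine (norm_sum_le _ _).trans ?_
  refine (Finset.sum_le_sum fun i _ => norm_ev _).trans ?_
  simp

/-- zero out the last nonzero digit of the length `n` prefix. -/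
noncomputable def trunc (n : ℕ) (a : Seq3) (i : ℕ) : Fin 3 :=
  open Classical in if ∀ j, i < j → j < n → a j = 0 then 0 else a i

lemma trunc_sum (n : ℕ) (a : Seq3) :
    ‖∑ i ∈ Finset.range n, ev (trunc n a i) - ∑ i ∈ Finset.range n, ev (a i)‖ ≤ 1 := by
  classical
  rw [← Finset.sum_sub_distrib]
  by_cases h : ∃ q, q < n ∧ a q ≠ 0 ∧ ∀ j, q < j → j < n → a j = 0
  · obtain ⟨q, hq, hq0, hqj⟩ := h
    rw [Finset.sum_eq_single_of_mem q (Finset.mem_range.2 hq)]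
    · exact norm_ev_sub _ _
    · intro b hb hbq
      rw [Finset.mem_range] at hb
      rcases lt_or_gt_of_ne hbq with h | h
      · have : ¬ ∀ j, b < j → j < n → a j = 0 := fun hh => hq0 (hh q h hq)
        simp [trunc, this]
      · have : a b = 0 := hqj b h hb
        simp [trunc, this]
  · rw [Finset.sum_eq_zero]
    · simp
    · intro b hb
      rw [Finset.mem_range] at hb
      unfold trunc
      split_ifs with h1
      · have : a b = 0 := by
          by_contra hc
          exact h ⟨b, hb, hc, h1⟩
        simp [this]
      · simp

lemma trunc_lt (n : ℕ) {w w0 s : Seq3} (hw : w 0 = 2) (hs : s ∈ BetaShift w0)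
    (hag : ∀ i, i < n → w0 i = w i) (p : ℕ) (hp : p < n) :
    ∃ q, p + q < n ∧ (∀ i, i < q → trunc n s (p + i) = w i) ∧ trunc n s (p + q) < w q := by
  classical
  by_cases h : ∀ j, p < j → j < n → s j = 0
  · refine ⟨0, hp, fun i hi => by omega, ?_⟩
    rw [hw]
    have : trunc n s (p + 0) = 0 := by simp only [trunc, add_zero]; rw [if_pos h]
    rw [this]; decide
  · -- last nonzero
    push Not at h
    obtain ⟨j, hj1, hj2, hj3⟩ := h
    let q0 := Nat.findGreatest (fun k => s k ≠ 0) (n-1)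
    have hq0 : s q0 ≠ 0 := Nat.findGreatest_spec (P := fun k => s k ≠ 0) (by omega : j ≤ n-1) hj3
    have hjq : j ≤ q0 := Nat.le_findGreatest (by omega) hj3
    have hqn : q0 ≤ n - 1 := Nat.findGreatest_le _
    have hlast : ∀ k, q0 < k → k < n → s k = 0 := by
      intro k hk hkn
      by_contra hc
      have := Nat.le_findGreatest (P := fun k => s k ≠ 0) (by omega : k ≤ n-1) hc
      change k ≤ q0 at this
      omega
    have ht0 : trunc n s q0 = 0 := by unfold trunc; rw [if_pos hlast]
    have ht : ∀ k, k < q0 → trunc n s k = s k := by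
      intro k hk
      unfold trunc
      rw [if_neg]
      intro hh
      exact hq0 (hh q0 hk (by omega))
    have hL := (lexLe_iff _ _).1 (hs p)
    simp only [shift_iter] at hL
    by_cases hag2 : ∀ i, i < q0 - p → s (p + i) = w0 i
    · refine ⟨q0 - p, by omega, ?_, ?_⟩
      · intro i hi
        rw [ht _ (by omega), hag2 i hi, hag i (by omega)]
      · have e : p + (q0 - p) = q0 := by omega
        rw [e, ht0, ← hag _ (by omega)]
        have := hL (q0 - p) hag2
        rw [e] at this
        exact lt_of_lt_of_le (Fin.pos_iff_ne_zero.2 hq0) this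
    · push Not at hag2
      have hd := Nat.find_spec hag2
      have hdm : ∀ i, i < Nat.find hag2 → s (p + i) = w0 i := by
        intro i hi
        have := Nat.find_min hag2 hi
        by_contra hc
        exact this ⟨by omega, hc⟩
      refine ⟨Nat.find hag2, by omega, ?_, ?_⟩
      · intro i hi
        rw [ht _ (by omega), hdm i hi, hag i (by omega)]
      · rw [ht _ (by omega), ← hag _ (by omega)]
        exact lt_of_le_of_ne (hL _ hdm) hd.2

/-- block index -/
noncomputable def bidx (T : ℕ → ℕ) (k : ℕ) : ℕ := Nat.findGreatest (fun j => T j ≤ k) k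

lemma bidx_spec {T : ℕ → ℕ} (hT : StrictMono T) (h0 : T 0 = 0) (k : ℕ) :
    T (bidx T k) ≤ k ∧ k < T (bidx T k + 1) := by
  have h1 : T (bidx T k) ≤ k :=
    Nat.findGreatest_spec (P := fun j => T j ≤ k) (Nat.zero_le k) (by simp [h0])
  refine ⟨h1, ?_⟩
  by_contra hc
  push Not at hc
  have h3 := hT.le_apply (x := bidx T k + 1)
  have := Nat.le_findGreatest (P := fun j => T j ≤ k) (by omega : bidx T k + 1 ≤ k) hc
  change _ ≤ bidx T k at this
  omega

lemma bidx_eq {T : ℕ → ℕ} (hT : StrictMono T) (h0 : T 0 = 0) {k j : ℕ}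
    (h1 : T j ≤ k) (h2 : k < T (j + 1)) : bidx T k = j := by
  obtain ⟨a, b⟩ := bidx_spec hT h0 k
  have c := hT.lt_iff_lt.1 (lt_of_le_of_lt h1 b)
  have d := hT.lt_iff_lt.1 (lt_of_le_of_lt a h2)
  omega

/-- concatenation of truncated blocks -/
noncomputable def concat (T : ℕ → ℕ) (s : ℕ → Seq3) : Seq3 := fun k =>
  trunc (T (bidx T k + 1) - T (bidx T k)) (s (bidx T k)) (k - T (bidx T k))

lemma concat_eq {T : ℕ → ℕ} (hT : StrictMono T) (h0 : T 0 = 0) (s : ℕ → Seq3) (j i : ℕ)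
    (hi : i < T (j+1) - T j) : concat T s (T j + i) = trunc (T (j+1) - T j) (s j) i := by
  unfold concat
  rw [bidx_eq hT h0 (j := j) (by omega) (by omega)]
  congr 1; omega

lemma concat_mem {T : ℕ → ℕ} (hT : StrictMono T) (h0 : T 0 = 0) {s : ℕ → Seq3} {w w0 : Seq3}
    (hw : w 0 = 2) (hs : ∀ j, s j ∈ BetaShift w0)
    (hag : ∀ j i, i < T (j+1) - T j → w0 i = w i) : concat T s ∈ BetaShift w := by
  intro r
  obtain ⟨h1, h2⟩ := bidx_spec hT h0 r
  set j := bidx T r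
  obtain ⟨q, hq1, hq2, hq3⟩ := trunc_lt (T (j+1) - T j) hw (hs j) (hag j) (r - T j) (by omega)
  have key : ∀ i, i ≤ q → shift^[r] (concat T s) i = trunc (T (j+1) - T j) (s j) (r - T j + i) := by
    intro i hi
    rw [shift_iter, ← concat_eq hT h0 s j _ (by omega)]
    congr 1; omega
  right
  refine ⟨q, fun i hi => by rw [key i hi.le, hq2 i hi], by rw [key q le_rfl]; exact hq3⟩

lemma concat_birk {T : ℕ → ℕ} (hT : StrictMono T) (h0 : T 0 = 0) (s : ℕ → Seq3) (j : ℕ) :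
    ‖birk (concat T s) (T (j+1)) - birk (concat T s) (T j) - birk (s j) (T (j+1) - T j)‖ ≤ 1 := by
  have hl : T j < T (j+1) := hT (by omega)
  have : birk (concat T s) (T (j+1)) = birk (concat T s) (T j) +
      ∑ i ∈ Finset.range (T (j+1) - T j), ev (trunc (T (j+1) - T j) (s j) i) := by
    have e : T (j+1) = T j + (T (j+1) - T j) := by omega
    rw [birk_eq, birk_eq]
    nth_rw 1 [e]
    rw [Finset.sum_range_add]
    congr 1
    refine Finset.sum_congr rfl fun i hi => ?_
    rw [concat_eq hT h0 s j i (Finset.mem_range.1 hi)]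
  rw [this, add_sub_cancel_left, birk_eq]
  exact trunc_sum _ _

lemma hasFreq_of {s : Seq3} {v : Fin 3 → ℝ}
    (h : Tendsto (fun k : ℕ => ‖birk s k - (k:ℝ) • v‖ / k) atTop (𝓝 0)) : hasFreq s v := by
  unfold hasFreq
  rw [tendsto_iff_norm_sub_tendsto_zero]
  refine h.congr' ?_
  filter_upwards [eventually_gt_atTop 0] with k hk
  have hk' : (k:ℝ) ≠ 0 := by positivity
  have : (k:ℝ)⁻¹ • birk s k - v = (k:ℝ)⁻¹ • (birk s k - (k:ℝ) • v) := by
    rw [smul_sub, smul_smul, inv_mul_cancel₀ hk', one_smul]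
  rw [this, norm_smul, norm_inv, Real.norm_natCast]
  field_simp

lemma hasFreq_of_bdd {s : Seq3} {v : Fin 3 → ℝ} (C : ℝ)
    (h : ∀ k : ℕ, ‖birk s k - (k:ℝ) • v‖ ≤ C) : hasFreq s v := by
  apply hasFreq_of
  have h1 : Tendsto (fun k : ℕ => C / (k:ℝ)) atTop (𝓝 0) :=
    tendsto_const_div_atTop_nhds_zero_nat C
  refine squeeze_zero (fun k => by positivity) (fun k => ?_) h1
  exact div_le_div_of_nonneg_right (h k) (by positivity)

lemma hasFreq_ev {s : Seq3} (a : Fin 3) (m : ℕ) (h : ∀ i, m ≤ i → s i = a) :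
    hasFreq s (ev a) := by
  apply hasFreq_of_bdd (m : ℝ)
  intro k
  have : birk s k - (k:ℝ) • ev a = ∑ i ∈ Finset.range k, (ev (s i) - ev a) := by
    rw [Finset.sum_sub_distrib, birk_eq, Finset.sum_const, Finset.card_range, Nat.cast_smul_eq_nsmul]
  rw [this]
  refine (norm_sum_le _ _).trans ?_
  have h2 : ∀ i ∈ Finset.range k, ‖ev (s i) - ev a‖ ≤ if i < m then (1:ℝ) else 0 := by
    intro i _
    split_ifs with hi
    · exact norm_ev_sub _ _
    · rw [h i (by omega)]; simp
  refine (Finset.sum_le_sum h2).trans ?_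
  rw [Finset.sum_boole]
  norm_cast
  have : Finset.filter (fun i => i < m) (Finset.range k) ⊆ Finset.range m := by
    intro i; simp
  simpa using Finset.card_le_card this

lemma bidx_tendsto {T : ℕ → ℕ} (hT : StrictMono T) (h0 : T 0 = 0) :
    Tendsto (bidx T) atTop atTop := by
  rw [tendsto_atTop]
  intro b
  filter_upwards [eventually_ge_atTop (T b)] with k hk
  have := (bidx_spec hT h0 k).2
  have := hT.lt_iff_lt.1 (lt_of_le_of_lt hk this)
  omega

lemma birk_diff (s : Seq3) {a b : ℕ} (h : a ≤ b) : ‖birk s b - birk s a‖ ≤ (b:ℝ) - a := by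
  obtain ⟨c, rfl⟩ := Nat.exists_eq_add_of_le h
  rw [birk_eq, birk_eq, Finset.sum_range_add, add_sub_cancel_left]
  refine (norm_sum_le _ _).trans ?_
  refine (Finset.sum_le_sum fun i _ => norm_ev _).trans ?_
  simp

lemma DF_isClosed {w : Seq3} (hw : w 0 = 2) : IsClosed (DF w) := by
  apply isClosed_of_closure_subset
  intro v hv
  let A : ℕ → Set (Fin 3 → ℝ) := fun n => (fun s => (n:ℝ)⁻¹ • birk s n) '' BetaShift w
  have hBne : (BetaShift w).Nonempty := by
    obtain ⟨v', s, hs, _⟩ := closure_nonempty_iff.1 ⟨v, hv⟩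
    exact ⟨s, hs⟩
  have hA : ∀ n, (A n).Nonempty := fun n => hBne.image _
  have h1 : Tendsto (fun n => Metric.infDist v (A n)) atTop (𝓝 0) := by
    rw [Metric.tendsto_atTop]
    intro ε hε
    obtain ⟨v', ⟨s, hs, hsv⟩, hd⟩ := Metric.mem_closure_iff.1 hv (ε/2) (by positivity)
    obtain ⟨N, hN⟩ := (Metric.tendsto_atTop.1 hsv) (ε/2) (by positivity)
    refine ⟨N, fun n hn => ?_⟩
    rw [Real.dist_0_eq_abs, abs_of_nonneg Metric.infDist_nonneg]
    rw [Metric.infDist_lt_iff (hA n)]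
    refine ⟨_, ⟨s, hs, rfl⟩, ?_⟩
    have a := hN n hn
    have b := dist_triangle v v' ((n:ℝ)⁻¹ • birk s n)
    rw [dist_comm] at a
    show dist v ((n:ℝ)⁻¹ • birk s n) < ε
    linarith
  have h2 : ∀ n : ℕ, ∃ s ∈ BetaShift w,
      dist v ((n:ℝ)⁻¹ • birk s n) < Metric.infDist v (A n) + 1 / ((n:ℝ)+1) := by
    intro n
    obtain ⟨y, ⟨s, hs, rfl⟩, hy⟩ := (Metric.infDist_lt_iff (hA n)).1
      (lt_add_of_pos_right (Metric.infDist v (A n)) (by positivity : 0 < 1 / ((n:ℝ)+1)))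
    exact ⟨s, hs, hy⟩
  choose s hs hsd using h2
  have h3 : Tendsto (fun n : ℕ => dist v ((n:ℝ)⁻¹ • birk (s n) n)) atTop (𝓝 0) := by
    refine squeeze_zero (fun _ => dist_nonneg) (fun n => (hsd n).le) ?_
    simpa using h1.add tendsto_one_div_add_atTop_nhds_zero_nat
  let T : ℕ → ℕ := fun j => ∑ i ∈ Finset.range j, (i+1)
  have hTs : ∀ j, T (j+1) = T j + (j+1) := fun j => Finset.sum_range_succ _ _
  have hT : StrictMono T := strictMono_nat_of_lt_succ fun j => by rw [hTs]; omega
  have h0 : T 0 = 0 := by simp [T]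
  have hTr : ∀ j, (T j : ℝ) = ∑ i ∈ Finset.range j, ((i:ℝ)+1) := by
    intro j; simp [T]
  have hT2 : ∀ j, (T j : ℝ) = j * (j+1) / 2 := by
    intro j
    induction j with
    | zero => simp [h0]
    | succ k ih => rw [hTs]; push_cast; rw [ih]; ring
  let x := concat T (fun j => s (j+1))
  have hx : x ∈ BetaShift w := concat_mem hT h0 hw (fun j => hs (j+1)) (fun _ _ _ => rfl)
  refine ⟨x, hx, ?_⟩
  let D : ℕ → (Fin 3 → ℝ) := fun k => birk x k - (k:ℝ) • v
  let f : ℕ → (Fin 3 → ℝ) := fun j => D (T (j+1)) - D (T j)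
  have hf : f =o[atTop] (fun j : ℕ => ((j:ℝ)+1)) := by
    have hb : ∀ j : ℕ, ‖f j‖ ≤ 1 + ((j:ℝ)+1) *
        dist v (((j+1 : ℕ):ℝ)⁻¹ • birk (s (j+1)) (j+1)) := by
      intro j
      have e1 := concat_birk hT h0 (fun j => s (j+1)) j
      have e2 : T (j+1) - T j = j+1 := by rw [hTs]; omega
      rw [e2] at e1
      have e3 : f j = (birk x (T (j+1)) - birk x (T j) - birk (s (j+1)) (j+1)) -
          ((j:ℝ)+1) • (v - ((j+1 : ℕ):ℝ)⁻¹ • birk (s (j+1)) (j+1)) := by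
        have e4 : ((j:ℝ)+1) • ((j+1 : ℕ):ℝ)⁻¹ • birk (s (j+1)) (j+1) = birk (s (j+1)) (j+1) := by
          rw [smul_smul]; push_cast
          rw [mul_inv_cancel₀ (by positivity), one_smul]
        rw [smul_sub, e4]
        simp only [f, D, hTs]
        push_cast
        module
      rw [e3]
      refine (norm_sub_le _ _).trans ?_
      gcongr
      rw [norm_smul, dist_eq_norm, Real.norm_of_nonneg (by positivity)]
    refine Asymptotics.IsBigO.trans_isLittleO (g := fun j : ℕ => 1 + ((j:ℝ)+1) *
        dist v (((j+1 : ℕ):ℝ)⁻¹ • birk (s (j+1)) (j+1))) ?_ ?_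
    · exact Asymptotics.IsBigO.of_norm_le hb
    · rw [Asymptotics.isLittleO_iff_tendsto (fun j hj => absurd hj (by positivity))]
      have : Tendsto (fun j : ℕ => 1 / ((j:ℝ)+1) +
          dist v (((j+1 : ℕ):ℝ)⁻¹ • birk (s (j+1)) (j+1))) atTop (𝓝 0) := by
        simpa using tendsto_one_div_add_atTop_nhds_zero_nat.add
          (h3.comp (tendsto_add_atTop_nat 1))
      refine this.congr fun j => ?_
      field_simp
  have hDT : (fun j => D (T j)) =o[atTop] (fun j => (T j : ℝ)) := by
    have hsum := hf.sum_range (fun j => by positivity) (by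
      have : Tendsto (fun j => (T j : ℝ)) atTop atTop :=
        tendsto_natCast_atTop_atTop.comp hT.tendsto_atTop
      simpa only [hTr] using this)
    have e : ∀ j, ∑ i ∈ Finset.range j, f i = D (T j) := by
      intro j
      rw [Finset.sum_range_sub (fun j => D (T j))]
      simp [D, h0, birk]
    simpa only [e, ← hTr] using hsum
  have hq : Tendsto (fun j : ℕ => ‖D (T j)‖ / T j + (1 + ‖v‖) * (((j:ℝ)+1) / T j)) atTop (𝓝 0) := by
    have a : Tendsto (fun j : ℕ => ‖D (T j)‖ / T j) atTop (𝓝 0) :=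
      hDT.norm_left.tendsto_div_nhds_zero
    have b : Tendsto (fun j : ℕ => ((j:ℝ)+1) / T j) atTop (𝓝 0) := by
      refine (tendsto_const_div_atTop_nhds_zero_nat 2).congr fun j => ?_
      rw [hT2]
      rcases Nat.eq_zero_or_pos j with h | h
      · simp [h]
      · field_simp
    simpa using a.add (b.const_mul (1 + ‖v‖))
  apply hasFreq_of
  refine squeeze_zero' (Eventually.of_forall fun k => by positivity) ?_ (hq.comp (bidx_tendsto hT h0))
  filter_upwards [(bidx_tendsto hT h0).eventually_ge_atTop 1] with k hk
  obtain ⟨b1, b2⟩ := bidx_spec hT h0 k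
  simp only [Function.comp]
  set j := bidx T k
  have hTj : 0 < T j := by rw [← h0]; exact hT (by omega)
  have hTj' : (0:ℝ) < T j := by exact_mod_cast hTj
  have hTk : (T j : ℝ) ≤ k := by exact_mod_cast b1
  have hkj : (k:ℝ) - T j ≤ (j:ℝ)+1 := by
    rw [hTs] at b2
    have : (k:ℝ) ≤ T j + (j+1) := by exact_mod_cast b2.le
    linarith
  have e : birk x k - (k:ℝ) • v = D (T j) + ((birk x k - birk x (T j)) - ((k:ℝ) - T j) • v) := by
    simp only [D]; module
  have hn : ‖birk x k - (k:ℝ) • v‖ ≤ ‖D (T j)‖ + (1 + ‖v‖) * ((j:ℝ)+1) := by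
    rw [e]
    refine (norm_add_le _ _).trans ?_
    gcongr
    refine (norm_sub_le _ _).trans ?_
    rw [norm_smul, Real.norm_of_nonneg (by linarith)]
    have := birk_diff x b1
    nlinarith [norm_nonneg v]
  calc ‖birk x k - (k:ℝ) • v‖ / k ≤ (‖D (T j)‖ + (1 + ‖v‖) * ((j:ℝ)+1)) / T j := by
        gcongr
    _ = _ := by ring

lemma birk_shift (s : Seq3) (a b : ℕ) : birk s (a + b) = birk s a + birk (shift^[a] s) b := by
  rw [birk_eq, birk_eq, birk_eq, Finset.sum_range_add]
  simp [shift_iter]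

lemma hasFreq_periodic {x : Seq3} {P : ℕ} (hP : 0 < P) (h : ∀ k, x (P + k) = x k) :
    hasFreq x ((P:ℝ)⁻¹ • birk x P) := by
  have hP' : (P:ℝ) ≠ 0 := by positivity
  set v := (P:ℝ)⁻¹ • birk x P
  let D : ℕ → (Fin 3 → ℝ) := fun k => birk x k - (k:ℝ) • v
  have hsh : shift^[P] x = x := by funext k; rw [shift_iter, h]
  have hD : Function.Periodic D P := by
    intro k
    have : (P:ℝ) • v = birk x P := by simp only [v]; rw [smul_smul, mul_inv_cancel₀ hP', one_smul]
    simp only [D]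
    rw [add_comm k P, birk_shift, hsh]
    push_cast
    rw [add_smul, this]
    abel
  apply hasFreq_of_bdd (∑ i ∈ Finset.range P, ‖D i‖)
  intro k
  change ‖D k‖ ≤ _
  rw [← hD.map_mod_nat k]
  exact Finset.single_le_sum (f := fun i => ‖D i‖) (fun i _ => norm_nonneg _)
    (Finset.mem_range.2 (Nat.mod_lt _ hP))

lemma DF_close {w w0 : Seq3} (hw : w 0 = 2) {n : ℕ} (hn : 0 < n)
    (hag : ∀ i, i < n → w0 i = w i) {v : Fin 3 → ℝ} (hv : v ∈ DF w0) :
    ∃ v' ∈ DF w, dist v v' ≤ 2 / n := by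
  obtain ⟨s, hs, hsv⟩ := hv
  have hn' : (0:ℝ) < n := by positivity
  obtain ⟨N0, hN0⟩ := (Metric.tendsto_atTop.1 hsv) (1/n) (by positivity)
  obtain ⟨N, hNpos, hNN⟩ : ∃ N, 0 < N ∧ N0 ≤ n * N := ⟨N0 + 1, by omega, by nlinarith⟩
  have hP := hN0 (n * N) hNN
  let T : ℕ → ℕ := fun j => n * j
  have hT : StrictMono T := fun a b h => Nat.mul_lt_mul_of_pos_left h hn
  have h0 : T 0 = 0 := rfl
  have hTd : ∀ j, T (j+1) - T j = n := fun j => by simp only [T]; rw [mul_add]; omega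
  let y : ℕ → Seq3 := fun j => shift^[n * (j % N)] s
  let x := concat T y
  have hx : x ∈ BetaShift w := concat_mem hT h0 hw (fun j => shift_mem hs _)
    (fun j i hi => hag i (by rw [hTd] at hi; exact hi))
  have hper : ∀ k, x (n * N + k) = x k := by
    intro k
    have e : ∀ j i, i < n → x (n * j + i) = trunc n (y j) i := by
      intro j i hi
      have := concat_eq hT h0 y j i (by rw [hTd]; exact hi)
      rw [hTd] at this
      exact this
    have hi : k % n < n := Nat.mod_lt _ hn
    have e1 : k = n * (k / n) + k % n := (Nat.div_add_mod k n).symm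
    have e2 : n * N + k = n * (k / n + N) + k % n := by
      rw [mul_add]; nth_rw 1 [e1]; ring
    rw [e2, e _ _ hi]
    conv_rhs => rw [e1]
    rw [e _ _ hi]
    simp [y]
  have hPpos : 0 < n * N := by positivity
  refine ⟨_, ⟨x, hx, hasFreq_periodic hPpos hper⟩, ?_⟩
  have hind : ∀ j, j ≤ N → ‖birk x (n * j) - birk s (n * j)‖ ≤ j := by
    intro j
    induction j with
    | zero => intro _; simp [birk]
    | succ k ih =>
      intro hk
      have a := ih (by omega)
      have b := concat_birk hT h0 y k
      rw [hTd] at b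
      have c : y k = shift^[n * k] s := by simp only [y]; rw [Nat.mod_eq_of_lt (by omega)]
      have d : birk s (n * (k+1)) = birk s (n * k) + birk (y k) n := by
        rw [mul_add, mul_one, birk_shift, c]
      have e : birk x (n * (k+1)) - birk s (n * (k+1)) =
        (birk x (n * k) - birk s (n * k)) +
          (birk x (T (k+1)) - birk x (T k) - birk (y k) n) := by
        rw [d]; simp only [T]; abel
      rw [e]
      refine (norm_add_le _ _).trans ?_
      push_cast
      exact add_le_add a b
  have hN' : (0:ℝ) < N := by positivity
  have h1 : dist (((n*N : ℕ):ℝ)⁻¹ • birk s (n*N)) (((n*N : ℕ):ℝ)⁻¹ • birk x (n*N)) ≤ 1 / n := by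
    rw [dist_comm, dist_eq_norm, ← smul_sub, norm_smul, norm_inv, Real.norm_natCast]
    calc ((n*N : ℕ):ℝ)⁻¹ * ‖birk x (n * N) - birk s (n * N)‖ ≤ ((n*N : ℕ):ℝ)⁻¹ * N := by
          gcongr; exact hind N le_rfl
      _ = 1 / n := by push_cast; field_simp
  have h2 := dist_triangle v (((n*N : ℕ):ℝ)⁻¹ • birk s (n*N)) (((n*N : ℕ):ℝ)⁻¹ • birk x (n*N))
  rw [dist_comm] at hP
  have : (2:ℝ)/n = 1/n + 1/n := by ring
  linarith

lemma zero_mem (w : Seq3) : ev 0 ∈ DF w := by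
  refine ⟨fun _ => 0, fun r => ?_, hasFreq_ev 0 0 fun _ _ => rfl⟩
  apply lexLe_of_le
  intro i
  rw [shift_iter]; exact Fin.zero_le _

lemma DF_subset (w : Seq3) : DF w ⊆ Metric.closedBall 0 1 := by
  rintro v ⟨s, _, hv⟩
  rw [mem_closedBall_zero_iff]
  refine le_of_tendsto hv.norm (Eventually.of_forall fun k => ?_)
  rw [norm_smul, norm_inv, Real.norm_natCast]
  have := norm_birk s k
  rcases Nat.eq_zero_or_pos k with h | h
  · simp [h]
  · have : (0:ℝ) < k := by positivity
    rw [inv_mul_le_iff₀ this]; linarith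

lemma DF_isCompact {w : Seq3} (hw : w 0 = 2) : IsCompact (DF w) :=
  (isCompact_closedBall 0 1).of_isClosed_subset (DF_isClosed hw) (DF_subset w)

lemma trunc_max {w : Seq3} (hw : w ∈ MaxSet) (n : ℕ) :
    (fun i => if i ≤ n then w i else 0 : Seq3) ∈ MaxSet := by
  refine ⟨by simpa using hw.1, fun r => ?_⟩
  rw [lexLe_iff]
  intro d hd
  simp only [shift_iter] at hd ⊢
  by_cases hr : r + d ≤ n
  · have hL := (lexLe_iff _ _).1 (hw.2 r) d
    simp only [shift_iter] at hL
    rw [if_pos hr, if_pos (by omega)]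
    apply hL
    intro i hi
    have := hd i hi
    rwa [if_pos (by omega), if_pos (by omega)] at this
  · rw [if_neg hr]; exact Fin.zero_le _

lemma gap {w0 w1 : Seq3} (h0 : w0 ∈ MaxSet) (h1 : w1 ∈ MaxSet) (hlt : ¬ lexLe w1 w0)
    (hgap : ∀ w ∈ MaxSet, lexLe w w0 ∨ lexLe w1 w) : DF w1 ⊆ DF w0 := by
  rintro v ⟨s, hs, hv⟩
  let K := closure {t : Seq3 | ∃ r : ℕ, shift^[r] s = t}
  have hK : IsCompact K := isClosed_closure.isCompact
  have hmem : ∀ r, shift^[r] s ∈ K := fun r => subset_closure ⟨r, rfl⟩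
  obtain ⟨t, ht, htm⟩ := exists_lexMax K hK ⟨_, hmem 0⟩
  have hst : s ∈ BetaShift t := fun r => htm _ (hmem r)
  have htw : lexLe t w1 := by
    have hc : IsClosed {x : Seq3 | lexLe x w1} :=
      isClosed_agree (f := fun x => x) (g := fun _ => w1) continuous_id continuous_const
    have : K ⊆ {x : Seq3 | lexLe x w1} := by
      apply closure_minimal _ hc
      rintro _ ⟨r, rfl⟩
      exact hs r
    exact this ht
  by_cases ht2 : t 0 = 2
  · have hshiftK : ∀ r, ∀ x ∈ K, shift^[r] x ∈ K := by
      intro r x hx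
      refine map_mem_closure (continuous_shift_iter r) hx ?_
      rintro _ ⟨q, rfl⟩
      exact ⟨r + q, Function.iterate_add_apply _ _ _ _⟩
    have htM : t ∈ MaxSet := ⟨ht2, fun r => htm _ (hshiftK r t ht)⟩
    rcases hgap t htM with h | h
    · exact ⟨s, beta_mono h hst, hv⟩
    · have htw1 : t = w1 := lexLe_antisymm htw h
      obtain ⟨n, hn1, hn2⟩ := not_lexLe hlt
      have hz := trunc_max h1 n
      set z : Seq3 := fun i => if i ≤ n then w1 i else 0 with hzdef
      have hzw : lexLe w1 z := by
        rcases hgap z hz with h | h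
        · exfalso
          have := (lexLe_iff _ _).1 h n (fun i hi => by
            simp only [hzdef]; rw [if_pos hi.le, hn1 i hi])
          simp only [hzdef, le_refl, if_true] at this
          exact absurd hn2 (not_lt.2 this)
        · exact h
      have hzw' : lexLe z w1 := by
        apply lexLe_of_le
        intro i
        simp only [hzdef]
        split_ifs
        · exact le_rfl
        · exact Fin.zero_le _
      have hzeq := lexLe_antisymm hzw hzw'
      have hw10 : ∀ i, n < i → w1 i = 0 := by
        intro i hi
        rw [hzeq, hzdef]
        simp only
        rw [if_neg (by omega)]
      -- find a shift agreeing with t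
      have hU : IsOpen {x : Seq3 | ∀ i ∈ Finset.range (n+1), x i = t i} := by
        have : {x : Seq3 | ∀ i ∈ Finset.range (n+1), x i = t i} =
            ⋂ i ∈ Finset.range (n+1), (fun x : Seq3 => x i) ⁻¹' {t i} := by
          ext x; simp
        rw [this]
        exact isOpen_biInter_finset fun i _ => (isOpen_discrete _).preimage (continuous_apply i)
      obtain ⟨_, hx, ⟨r, rfl⟩⟩ := mem_closure_iff.1 ht _ hU (fun i _ => rfl)
      have hx' : ∀ i, i ≤ n → s (r + i) = w1 i := by
        intro i hi
        have := hx i (by simp; omega)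
        rwa [shift_iter, htw1] at this
      have hL := (lexLe_iff _ _).1 (hs r)
      simp only [shift_iter] at hL
      have hall : ∀ i, s (r + i) = w1 i := by
        intro i
        induction i using Nat.strong_induction_on with
        | _ i ih =>
          by_cases hi : i ≤ n
          · exact hx' i hi
          · have a := hL i ih
            rw [hw10 i (by omega)] at a ⊢
            exact Fin.le_zero_iff.1 a
      have hs0 : hasFreq s (ev 0) := by
        apply hasFreq_ev 0 (r + (n+1))
        intro i hi
        obtain ⟨c, rfl⟩ := Nat.exists_eq_add_of_le hi
        rw [add_assoc, hall, hw10 _ (by omega)]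
      have : v = ev 0 := tendsto_nhds_unique hv hs0
      rw [this]
      exact zero_mem w0
  · refine ⟨s, fun r => ?_, hv⟩
    right
    refine ⟨0, fun i hi => by omega, ?_⟩
    have := (lexLe_iff _ _).1 (hst r) 0 (fun i hi => by omega)
    rw [h0.1]
    refine lt_of_le_of_lt this ?_
    revert ht2
    generalize t 0 = a
    revert a
    decide

/-- the map to compacts -/
noncomputable def FF (w : {w : Seq3 // w ∈ MaxSet}) :
    TopologicalSpace.NonemptyCompacts (Fin 3 → ℝ) :=
  ⟨⟨DF w.1, DF_isCompact w.2.1⟩, ⟨_, zero_mem w.1⟩⟩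

lemma FF_coe (w : {w : Seq3 // w ∈ MaxSet}) : (FF w : Set (Fin 3 → ℝ)) = DF w.1 := rfl

lemma FF_cont : Continuous FF := by
  rw [continuous_iff_continuousAt]
  intro w
  rw [ContinuousAt, Metric.tendsto_nhds]
  intro ε hε
  obtain ⟨n, hn⟩ := exists_nat_gt (2 / ε)
  have hn' : (0:ℝ) < n := lt_trans (by positivity) hn
  have hn0 : 0 < n := by exact_mod_cast hn'
  have hU : ∀ᶠ w' : {w : Seq3 // w ∈ MaxSet} in 𝓝 w, ∀ i ∈ Finset.range n, w'.1 i = w.1 i := by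
    rw [Filter.eventually_all_finset]
    intro i _
    have hc : Continuous (fun w' : {w : Seq3 // w ∈ MaxSet} => w'.1 i) :=
      (continuous_apply i).comp continuous_subtype_val
    exact hc.continuousAt.eventually (IsOpen.mem_nhds (isOpen_discrete {w.1 i}) rfl)
  filter_upwards [hU] with w' hw'
  have hag : ∀ i, i < n → w'.1 i = w.1 i := fun i hi => hw' i (Finset.mem_range.2 hi)
  have : dist (FF w') (FF w) ≤ 2 / n := by
    rw [Metric.NonemptyCompacts.dist_eq]
    refine Metric.hausdorffDist_le_of_mem_dist (by positivity) ?_ ?_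
    · intro v hv
      exact DF_close w.2.1 hn0 hag hv
    · intro v hv
      exact DF_close w'.2.1 hn0 (fun i hi => (hag i hi).symm) hv
  refine lt_of_le_of_lt this ?_
  rw [div_lt_iff₀ hn']
  rw [div_lt_iff₀ hε] at hn
  linarith

/-- a strictly monotone continuous function on nonempty compacts -/
noncomputable def hh (K : TopologicalSpace.NonemptyCompacts (Fin 3 → ℝ)) : ℝ :=
  - ∑' n : ℕ, (1/2:ℝ)^n * min 1 (Metric.infDist (TopologicalSpace.denseSeq (Fin 3 → ℝ) n) K)

lemma hh_term (n : ℕ) (K : TopologicalSpace.NonemptyCompacts (Fin 3 → ℝ)) :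
    ‖(1/2:ℝ)^n * min 1 (Metric.infDist (TopologicalSpace.denseSeq (Fin 3 → ℝ) n) K)‖ ≤ (1/2)^n := by
  have h : 0 ≤ min 1 (Metric.infDist (TopologicalSpace.denseSeq (Fin 3 → ℝ) n) K) :=
    le_min zero_le_one Metric.infDist_nonneg
  rw [Real.norm_of_nonneg (by positivity)]
  exact mul_le_of_le_one_right (by positivity) (min_le_left _ _)

lemma hh_summable (K : TopologicalSpace.NonemptyCompacts (Fin 3 → ℝ)) :
    Summable fun n : ℕ =>
      (1/2:ℝ)^n * min 1 (Metric.infDist (TopologicalSpace.denseSeq (Fin 3 → ℝ) n) K) :=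
  Summable.of_norm_bounded summable_geometric_two (fun n => hh_term n K)

lemma hh_cont : Continuous hh := by
  apply Continuous.neg
  refine continuous_tsum (fun n => ?_) summable_geometric_two hh_term
  exact continuous_const.mul (continuous_const.min
    (Metric.lipschitz_infDist_set _).continuous)

lemma hh_mono {K K' : TopologicalSpace.NonemptyCompacts (Fin 3 → ℝ)}
    (h : (K : Set (Fin 3 → ℝ)) ⊆ K') : hh K ≤ hh K' := by
  unfold hh
  rw [neg_le_neg_iff]
  refine (hh_summable K').tsum_le_tsum (fun n => ?_) (hh_summable K)
  gcongr
  exact Metric.infDist_le_infDist_of_subset h K.nonempty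

lemma hh_eq {K K' : TopologicalSpace.NonemptyCompacts (Fin 3 → ℝ)}
    (h : (K : Set (Fin 3 → ℝ)) ⊆ K') (he : hh K = hh K') : K = K' := by
  have hle : ∀ n, Metric.infDist (TopologicalSpace.denseSeq (Fin 3 → ℝ) n) K' ≤
      Metric.infDist (TopologicalSpace.denseSeq (Fin 3 → ℝ) n) K := fun n =>
    Metric.infDist_le_infDist_of_subset h K.nonempty
  have hterm : ∀ n, min 1 (Metric.infDist (TopologicalSpace.denseSeq (Fin 3 → ℝ) n) K) =
      min 1 (Metric.infDist (TopologicalSpace.denseSeq (Fin 3 → ℝ) n) K') := by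
    by_contra hc
    push Not at hc
    obtain ⟨n, hn⟩ := hc
    have : hh K < hh K' := by
      unfold hh
      rw [neg_lt_neg_iff]
      refine (hh_summable K').tsum_lt_tsum (i := n) (fun m => ?_) ?_ (hh_summable K)
      · gcongr
        exact hle m
      · have := lt_of_le_of_ne (min_le_min_left 1 (hle n)) hn.symm
        gcongr
    exact this.ne he
  have hall : ∀ x : Fin 3 → ℝ, min 1 (Metric.infDist x (K : Set (Fin 3 → ℝ))) =
      min 1 (Metric.infDist x (K' : Set (Fin 3 → ℝ))) := by
    have := (TopologicalSpace.denseRange_denseSeq (Fin 3 → ℝ)).equalizer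
      (g := fun x => min 1 (Metric.infDist x (K : Set (Fin 3 → ℝ))))
      (h := fun x => min 1 (Metric.infDist x (K' : Set (Fin 3 → ℝ))))
      (continuous_const.min (Metric.continuous_infDist_pt _))
      (continuous_const.min (Metric.continuous_infDist_pt _)) (funext hterm)
    exact fun x => congrFun this x
  apply SetLike.coe_injective
  refine Set.Subset.antisymm h fun x hx => ?_
  rw [K.isCompact.isClosed.mem_iff_infDist_zero K.nonempty]
  have := hall x
  rw [Metric.infDist_zero_of_mem hx] at this
  by_contra hne
  have hpos := lt_of_le_of_ne Metric.infDist_nonneg (Ne.symm hne)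
  have : 0 < min 1 (Metric.infDist x (K : Set (Fin 3 → ℝ))) := lt_min one_pos hpos
  simp_all

lemma FF_total (w w' : {w : Seq3 // w ∈ MaxSet}) :
    (FF w : Set (Fin 3 → ℝ)) ⊆ FF w' ∨ (FF w' : Set (Fin 3 → ℝ)) ⊆ FF w := by
  rcases lexLe_total w.1 w'.1 with h | h
  · exact Or.inl (DF_mono h)
  · exact Or.inr (DF_mono h)

lemma hh_le_iff (w w' : {w : Seq3 // w ∈ MaxSet}) :
    (FF w : Set (Fin 3 → ℝ)) ⊆ FF w' ↔ hh (FF w) ≤ hh (FF w') := by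
  refine ⟨hh_mono, fun h => ?_⟩
  rcases FF_total w w' with h1 | h1
  · exact h1
  · rw [hh_eq h1 (le_antisymm (hh_mono h1) h)]

/-- the bottom of Max -/
def wbot : Seq3 := fun i => if i = 0 then 2 else 0
/-- the top of Max -/
def wtop : Seq3 := fun _ => 2

lemma wtop_mem : wtop ∈ MaxSet :=
  ⟨rfl, fun r => lexLe_of_le _ _ fun i => by rw [shift_iter]; exact le_rfl⟩

lemma wbot_mem : wbot ∈ MaxSet := by
  refine ⟨rfl, fun r => lexLe_of_le _ _ fun i => ?_⟩
  rw [shift_iter]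
  unfold wbot
  split_ifs with h1 h2 h2
  · exact le_rfl
  · omega
  · exact Fin.zero_le _
  · exact le_rfl

lemma le_wtop (w : Seq3) : lexLe w wtop := lexLe_of_le _ _ fun i => by
  unfold wtop; exact Fin.le_last (w i)

lemma wbot_le {w : Seq3} (hw : w ∈ MaxSet) : lexLe wbot w := lexLe_of_le _ _ fun i => by
  unfold wbot
  split_ifs with h
  · rw [h, hw.1]
  · exact Fin.zero_le _

lemma hhbot_lt_hhtop : hh (FF ⟨wbot, wbot_mem⟩) < hh (FF ⟨wtop, wtop_mem⟩) := by
  rw [← not_le, ← hh_le_iff]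
  intro h
  have h2 : ev 2 ∈ DF wtop := ⟨wtop, fun r => le_wtop _, hasFreq_ev 2 0 fun _ _ => rfl⟩
  obtain ⟨s, hs, hv⟩ : ev 2 ∈ DF wbot := h h2
  by_cases hex : ∃ r, s r = 2
  · obtain ⟨r, hr⟩ := hex
    have hL := (lexLe_iff _ _).1 (hs r)
    simp only [shift_iter] at hL
    have hall : ∀ i, s (r + i) = wbot i := by
      intro i
      induction i using Nat.strong_induction_on with
      | _ i ih =>
        rcases Nat.eq_zero_or_pos i with h | h
        · subst h; exact hr
        · have a := hL i ih
          have b : wbot i = 0 := by unfold wbot; rw [if_neg (by omega)]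
          rw [b] at a ⊢
          exact Fin.le_zero_iff.1 a
    have hs0 : hasFreq s (ev 0) := by
      apply hasFreq_ev 0 (r + 1)
      intro i hi
      obtain ⟨c, rfl⟩ := Nat.exists_eq_add_of_le hi
      rw [add_assoc, hall]
      unfold wbot; rw [if_neg (by omega)]
    have := congrFun (tendsto_nhds_unique hv hs0) 2
    simp [ev] at this
  · push Not at hex
    have hb : ∀ k, birk s k 2 = 0 := by
      intro k
      rw [birk_eq, Finset.sum_apply]
      refine Finset.sum_eq_zero fun i _ => ?_
      simp [ev, (hex i).symm]
    have h1 := (tendsto_pi_nhds.1 hv) 2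
    simp only [Pi.smul_apply, hb, smul_zero] at h1
    have := tendsto_nhds_unique h1 tendsto_const_nhds
    simp [ev] at this

lemma image_eq : Set.range (fun w => hh (FF w)) =
    Set.Icc (hh (FF ⟨wbot, wbot_mem⟩)) (hh (FF ⟨wtop, wtop_mem⟩)) := by
  apply Set.Subset.antisymm
  · rintro _ ⟨w, rfl⟩
    exact ⟨hh_mono (DF_mono (wbot_le w.2)), hh_mono (DF_mono (le_wtop w.1))⟩
  · rintro y ⟨hy1, hy2⟩
    by_contra hy
    have hG : Continuous (fun w => hh (FF w)) := hh_cont.comp FF_cont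
    have : CompactSpace {w : Seq3 // w ∈ MaxSet} := isCompact_iff_compactSpace.1 isCompact_MaxSet
    let S : Set Seq3 := Subtype.val '' {w : {w : Seq3 // w ∈ MaxSet} | hh (FF w) ≤ y}
    let U : Set Seq3 := Subtype.val '' {w : {w : Seq3 // w ∈ MaxSet} | y ≤ hh (FF w)}
    have hS : IsCompact S :=
      (isClosed_le hG continuous_const).isCompact.image continuous_subtype_val
    have hU : IsCompact U :=
      (isClosed_le continuous_const hG).isCompact.image continuous_subtype_val
    obtain ⟨_, ⟨w0, hw0, rfl⟩, hm0⟩ := exists_lexMax S hS ⟨_, ⟨_, hy1, rfl⟩⟩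
    obtain ⟨_, ⟨w1, hw1, rfl⟩, hm1⟩ := exists_lexMin U hU ⟨_, ⟨_, hy2, rfl⟩⟩
    have hlt : hh (FF w0) < hh (FF w1) := by
      refine lt_of_lt_of_le (lt_of_le_of_ne hw0 ?_) hw1
      intro he
      exact hy ⟨w0, he⟩
    have := gap w0.2 w1.2 (fun h => absurd (hh_mono (K := FF w1) (K' := FF w0) (DF_mono h)) (not_le.2 hlt)) (by
      intro w hw
      rcases le_total (hh (FF ⟨w, hw⟩)) y with h | h
      · exact Or.inl (hm0 _ ⟨⟨w, hw⟩, h, rfl⟩)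
      · exact Or.inr (hm1 _ ⟨⟨w, hw⟩, h, rfl⟩))
    exact absurd (hh_mono (K := FF w1) (K' := FF w0) this) (not_le.2 hlt)

end Helpers

/-- The collection `𝒟 = {DF(w) : w ∈ Max}`, with the Hausdorff metric,
is totally ordered by inclusion and is order-preserving homeomorphic to a compact
interval. -/
theorem stmt11 :
    ∃ F : {w : Seq3 // w ∈ MaxSet} → TopologicalSpace.NonemptyCompacts (Fin 3 → ℝ),
      (∀ w, (F w : Set (Fin 3 → ℝ)) = DF w.1) ∧
      (∀ w w' : {w : Seq3 // w ∈ MaxSet},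
        (F w : Set (Fin 3 → ℝ)) ⊆ (F w' : Set (Fin 3 → ℝ)) ∨
          (F w' : Set (Fin 3 → ℝ)) ⊆ (F w : Set (Fin 3 → ℝ))) ∧
      ∃ h : ↥(Set.range F) ≃ₜ ↥(Set.Icc (0 : ℝ) 1),
        ∀ Λ Λ' : ↥(Set.range F),
          ((Λ : TopologicalSpace.NonemptyCompacts (Fin 3 → ℝ)) : Set (Fin 3 → ℝ)) ⊆
              ((Λ' : TopologicalSpace.NonemptyCompacts (Fin 3 → ℝ)) : Set (Fin 3 → ℝ)) ↔
            (h Λ : ℝ) ≤ (h Λ' : ℝ) := by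

  refine ⟨FF, FF_coe, FF_total, ?_⟩
  set a := hh (FF ⟨wbot, wbot_mem⟩) with ha
  set b := hh (FF ⟨wtop, wtop_mem⟩) with hb
  have hab : a < b := hhbot_lt_hhtop
  have hba : 0 < b - a := by linarith
  have himg := image_eq
  have hrange : ∀ Λ : ↥(Set.range FF), hh Λ.1 ∈ Set.Icc a b := by
    rintro ⟨_, ⟨w, rfl⟩⟩
    rw [← himg]
    exact ⟨w, rfl⟩
  have hiff : ∀ Λ Λ' : ↥(Set.range FF),
      ((Λ : TopologicalSpace.NonemptyCompacts (Fin 3 → ℝ)) : Set (Fin 3 → ℝ)) ⊆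
        ((Λ' : TopologicalSpace.NonemptyCompacts (Fin 3 → ℝ)) : Set (Fin 3 → ℝ)) ↔
      hh Λ.1 ≤ hh Λ'.1 := by
    rintro ⟨_, ⟨w, rfl⟩⟩ ⟨_, ⟨w', rfl⟩⟩
    exact hh_le_iff w w'
  let g : ↥(Set.range FF) → ↥(Set.Icc (0:ℝ) 1) := fun Λ =>
    ⟨(hh Λ.1 - a) / (b - a), by
      have := hrange Λ
      constructor
      · exact div_nonneg (by linarith [this.1]) hba.le
      · rw [div_le_one hba]; linarith [this.2]⟩
  have hg : Continuous g := by
    apply Continuous.subtype_mk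
    exact ((hh_cont.comp continuous_subtype_val).sub continuous_const).div_const _
  have hgle : ∀ Λ Λ', (g Λ : ℝ) ≤ g Λ' ↔ hh Λ.1 ≤ hh Λ'.1 := by
    intro Λ Λ'
    simp only [g]
    rw [div_le_div_iff_of_pos_right hba]
    constructor <;> intro h <;> linarith
  have hbij : Function.Bijective g := by
    constructor
    · intro Λ Λ' h
      apply Subtype.ext
      apply SetLike.coe_injective
      exact Set.Subset.antisymm ((hiff _ _).2 ((hgle _ _).1 (by rw [h])))
        ((hiff _ _).2 ((hgle _ _).1 (by rw [h])))
    · rintro ⟨y, hy0, hy1⟩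
      have : a + y * (b - a) ∈ Set.range (fun w => hh (FF w)) := by
        rw [himg]
        constructor <;> nlinarith
      obtain ⟨w, hw⟩ := this
      refine ⟨⟨FF w, w, rfl⟩, ?_⟩
      apply Subtype.ext
      simp only [g]
      simp only at hw
      rw [hw]
      field_simp
      ring
  have : CompactSpace {w : Seq3 // w ∈ MaxSet} := isCompact_iff_compactSpace.1 isCompact_MaxSet
  have : CompactSpace ↥(Set.range FF) :=
    isCompact_iff_compactSpace.1 (isCompact_range FF_cont)
  refine ⟨Continuous.homeoOfEquivCompactToT2 (f := Equiv.ofBijective g hbij) hg, ?_⟩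
  intro Λ Λ'
  rw [hiff, ← hgle]
  rfl
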